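/- Minimal output entropy of the convolutional channel: for n-qudit states ρ and σ, the output state ρ ⊠ σ is pure (equivalently, H(ρ ⊠ σ) = 0, the minimal possible output entropy) if and only if ρ and σ are both pure stabilizer states whose stabilizer label groups S₁, S₂ ⊆ V^n satisfy S₁ = {(−g₁₀⁻¹ g₁₁ x⃗, g₀₁⁻¹ g₀₀ y⃗) : (x⃗, y⃗) ∈ S₂}, where inverses are taken in ℤ_d. -/

import Mathlib

open scoped BigOperators ComplexOrder Classical ENNReal
open Matrix

namespace PaperQI

/-- The computational-basis index set `ℤ_d^n` for an `n`-qudit system. -/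
abbrev QV (d n : ℕ) := Fin n → ZMod d

/-- Matrices (linear operators) on the `n`-qudit Hilbert space `(ℂ^d)^{⊗ n}`,
written in the computational basis indexed by `ℤ_d^n`. -/
abbrev Mat (d n : ℕ) := Matrix (QV d n) (QV d n) ℂ

/-- The character `ξ^z = exp(2πi z/d)` for `z ∈ ℤ_d`. -/
noncomputable def ch (d : ℕ) (z : ZMod d) : ℂ :=
  Complex.exp (2 * Real.pi * Complex.I * (z.val : ℂ) / (d : ℂ))

/-- Dot product on `ℤ_d^n`. -/
def qdot {d n : ℕ} (p k : QV d n) : ZMod d := ∑ i, p i * k i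

/-- The `n`-qudit Weyl operator `w(p,q) = ⊗_i ξ^{-2⁻¹ p_i q_i} Z^{p_i} X^{q_i}`
(for odd prime `d`).  Its matrix entries are
`w(p,q)[k+q, k] = ξ^{p·k + 2⁻¹ p·q}`. -/
noncomputable def weyl (d n : ℕ) [Fact (Nat.Prime d)] (p q : QV d n) : Mat d n :=
  Matrix.of fun k' k =>
    if k' = k + q then ch d (qdot p k + (2 : ZMod d)⁻¹ * qdot p q) else 0

/-- `ρ` is an `n`-qudit state: positive semidefinite with trace one. -/
def IsState (d n : ℕ) [Fact (Nat.Prime d)] (ρ : Mat d n) : Prop :=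
  ρ.PosSemidef ∧ ρ.trace = 1

/-- The characteristic function `Ξ_ρ(p,q) = Tr[ρ w(-p,-q)]`. -/
noncomputable def xi (d n : ℕ) [Fact (Nat.Prime d)] (ρ : Mat d n)
    (pq : QV d n × QV d n) : ℂ :=
  (ρ * weyl d n (-pq.1) (-pq.2)).trace

/-- The mean state `M(ρ) = d^{-n} ∑_{|Ξ_ρ(p,q)| = 1} Ξ_ρ(p,q) w(p,q)`. -/
noncomputable def meanState (d n : ℕ) [Fact (Nat.Prime d)] (ρ : Mat d n) : Mat d n :=
  ((d : ℂ) ^ n)⁻¹ •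
    ∑ pq : QV d n × QV d n,
      if ‖xi d n ρ pq‖ = 1 then xi d n ρ pq • weyl d n pq.1 pq.2 else 0

/-- `ρ` is a minimal stabilizer-projection state (MSPS): for some `r ≤ n` there are
mutually commuting Weyl operators `w(p_i,q_i)`, `i = 1,…,r`, whose labels generate a
subgroup of `V^n` of order `d^r`, and phases `x ∈ ℤ_d^r`, such that
`ρ = d^{-(n-r)} ∏_i ( (1/d) ∑_{k ∈ ℤ_d} (ξ^{x_i} w(p_i,q_i))^k )`. -/
noncomputable def IsMSPS (d n : ℕ) [Fact (Nat.Prime d)] (ρ : Mat d n) : Prop :=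
  ∃ r : ℕ, r ≤ n ∧
    ∃ (p q : Fin r → QV d n) (x : Fin r → ZMod d),
      (∀ i j, Commute (weyl d n (p i) (q i)) (weyl d n (p j) (q j))) ∧
      Nat.card (AddSubgroup.closure (Set.range fun i => (p i, q i)) :
        AddSubgroup (QV d n × QV d n)) = d ^ r ∧
      ρ = ((d : ℂ) ^ (n - r))⁻¹ •
        (List.ofFn fun i =>
          (d : ℂ)⁻¹ • ∑ k : ZMod d, (ch d (x i) • weyl d n (p i) (q i)) ^ k.val).prod

/-- The magic gap `MG(ρ) = 1 - max{|Ξ_ρ(p,q)| : Ξ_ρ(p,q) ≠ 0, |Ξ_ρ(p,q)| ≠ 1}`,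
and `MG(ρ) = 0` if this set is empty. -/
noncomputable def magicGap (d n : ℕ) [Fact (Nat.Prime d)] (ρ : Mat d n) : ℝ :=
  let s : Finset ℝ :=
    (Finset.univ.filter fun pq : QV d n × QV d n =>
      xi d n ρ pq ≠ 0 ∧ ‖xi d n ρ pq‖ ≠ 1).image
      fun pq => ‖xi d n ρ pq‖
  if h : s.Nonempty then 1 - s.max' h else 0

/-- Von Neumann entropy `H(ρ) = -∑ λ_i log λ_i` (natural log, eigenvalues of `ρ`),
with the convention `0 log 0 = 0`; junk value `0` on non-Hermitian matrices. -/
noncomputable def vnEnt {d n : ℕ} [Fact (Nat.Prime d)] (ρ : Mat d n) : ℝ :=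
  if h : ρ.IsHermitian then -∑ i, h.eigenvalues i * Real.log (h.eigenvalues i) else 0

/-- Rényi entropy `H_α` for `α ∈ [0,∞]`:  `H_0 = log rank`, `H_1 = H` (von Neumann),
`H_∞ = -log λ_max`, and `H_α = (1-α)⁻¹ log ∑ λ_i^α` otherwise. -/
noncomputable def renyiEnt {d n : ℕ} [Fact (Nat.Prime d)] (α : ℝ≥0∞) (ρ : Mat d n) : ℝ :=
  if h : ρ.IsHermitian then
    if α = 0 then Real.log (ρ.rank : ℝ)
    else if α = 1 then -∑ i, h.eigenvalues i * Real.log (h.eigenvalues i)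
    else if α = ⊤ then -Real.log (⨆ i, h.eigenvalues i)
    else (1 - α.toReal)⁻¹ * Real.log (∑ i, h.eigenvalues i ^ α.toReal)
  else 0

/-- Matrix logarithm on the support: `log ρ = U diag(log λ_i) U†` via the spectral
decomposition, with `log 0 = 0` on the kernel; junk value `0` off Hermitian matrices. -/
noncomputable def matLog {d n : ℕ} [Fact (Nat.Prime d)] (ρ : Mat d n) : Mat d n :=
  if h : ρ.IsHermitian then
    (h.eigenvectorUnitary : Mat d n) *
      Matrix.diagonal (fun i => (Real.log (h.eigenvalues i) : ℂ)) *
      star (h.eigenvectorUnitary : Mat d n)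
  else 0

/-- Matrix real power on the support: `ρ^t = U diag(λ_i^t) U†`, with `0^t = 0` on the
kernel (for `t ≠ 0`); junk value `0` off Hermitian matrices. -/
noncomputable def matRpow {d n : ℕ} [Fact (Nat.Prime d)] (ρ : Mat d n) (t : ℝ) : Mat d n :=
  if h : ρ.IsHermitian then
    (h.eigenvectorUnitary : Mat d n) *
      Matrix.diagonal (fun i => ((h.eigenvalues i ^ t : ℝ) : ℂ)) *
      star (h.eigenvectorUnitary : Mat d n)
  else 0

/-- Support inclusion `supp ρ ⊆ supp σ`, expressed as `ker σ ⊆ ker ρ`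
(the correct notion for positive semidefinite matrices). -/
def suppLE {d n : ℕ} [Fact (Nat.Prime d)] (ρ σ : Mat d n) : Prop :=
  ∀ v : QV d n → ℂ, σ.mulVec v = 0 → ρ.mulVec v = 0

/-- Relative entropy `D(ρ‖σ) = Tr[ρ(log ρ - log σ)]` when `supp ρ ⊆ supp σ`, else `+∞`. -/
noncomputable def relEnt {d n : ℕ} [Fact (Nat.Prime d)] (ρ σ : Mat d n) : EReal :=
  if suppLE ρ σ then (((ρ * (matLog ρ - matLog σ)).trace.re : ℝ) : EReal) else ⊤

/-- Sandwiched Rényi relative entropy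
`D_α(ρ‖σ) = (α-1)⁻¹ log Tr[(σ^{(1-α)/(2α)} ρ σ^{(1-α)/(2α)})^α]` for `α ≠ 1`
(with `+∞` when `supp ρ ⊄ supp σ`), and `D_1 = D` the relative entropy. -/
noncomputable def sandRenyi {d n : ℕ} [Fact (Nat.Prime d)] (α : ℝ) (ρ σ : Mat d n) :
    EReal :=
  if α = 1 then relEnt ρ σ
  else if suppLE ρ σ then
    let x : ℝ := (α - 1)⁻¹ * Real.log
      ((matRpow (matRpow σ ((1 - α) / (2 * α)) * ρ * matRpow σ ((1 - α) / (2 * α)))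
        α).trace.re)
    (x : EReal)
  else ⊤

/-- The key unitary `U|i,j⟩ = |N g₁₁ i - N g₁₀ j, -N g₀₁ i + N g₀₀ j⟩`,
where `N = (det G)⁻¹` in `ℤ_d`. -/
noncomputable def convU (d n : ℕ) [Fact (Nat.Prime d)] (g00 g01 g10 g11 : ZMod d) :
    Matrix (QV d n × QV d n) (QV d n × QV d n) ℂ :=
  Matrix.of fun kl ij =>
    if kl = ((fun a => (g00 * g11 - g01 * g10)⁻¹ * g11 * ij.1 a
                      - (g00 * g11 - g01 * g10)⁻¹ * g10 * ij.2 a : QV d n),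
             (fun a => -((g00 * g11 - g01 * g10)⁻¹ * g01) * ij.1 a
                      + (g00 * g11 - g01 * g10)⁻¹ * g00 * ij.2 a : QV d n))
    then 1 else 0

/-- Tensor (Kronecker) product of two `n`-qudit operators, on the doubled system. -/
def kron {d n : ℕ} (ρ σ : Mat d n) : Matrix (QV d n × QV d n) (QV d n × QV d n) ℂ :=
  Matrix.of fun ij kl => ρ ij.1 kl.1 * σ ij.2 kl.2

/-- Partial trace over the second `n`-qudit factor. -/
noncomputable def ptrB {d n : ℕ} [Fact (Nat.Prime d)]
    (M : Matrix (QV d n × QV d n) (QV d n × QV d n) ℂ) : Mat d n :=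
  Matrix.of fun i i' => ∑ j : QV d n, M (i, j) (i', j)

/-- The convolution `ρ ⊠ σ = Tr_B[U (ρ ⊗ σ) U†]` with parameter matrix
`G = [g₀₀, g₀₁; g₁₀, g₁₁]`. -/
noncomputable def conv (d n : ℕ) [Fact (Nat.Prime d)] (g00 g01 g10 g11 : ZMod d)
    (ρ σ : Mat d n) : Mat d n :=
  ptrB (convU d n g00 g01 g10 g11 * kron ρ σ * (convU d n g00 g01 g10 g11)ᴴ)

/-- The beam-splitter unitary `U_{s,t}|i,j⟩ = |s i + t j, t i - s j⟩`. -/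
noncomputable def bsU (d n : ℕ) [Fact (Nat.Prime d)] (s t : ZMod d) :
    Matrix (QV d n × QV d n) (QV d n × QV d n) ℂ :=
  Matrix.of fun kl ij =>
    if kl = ((fun a => s * ij.1 a + t * ij.2 a : QV d n),
             (fun a => t * ij.1 a - s * ij.2 a : QV d n))
    then 1 else 0

/-- The beam-splitter convolution `ρ ⊠_{s,t} σ = Tr_B[U_{s,t} (ρ ⊗ σ) U_{s,t}†]`. -/
noncomputable def bsConv (d n : ℕ) [Fact (Nat.Prime d)] (s t : ZMod d)
    (ρ σ : Mat d n) : Mat d n :=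
  ptrB (bsU d n s t * kron ρ σ * (bsU d n s t)ᴴ)

/-- Iterated self-convolution: `⊠^0 ρ = ρ` and `⊠^{N+1} ρ = (⊠^N ρ) ⊠ ρ`. -/
noncomputable def bsIter (d n : ℕ) [Fact (Nat.Prime d)] (s t : ZMod d) :
    ℕ → Mat d n → Mat d n
  | 0, ρ => ρ
  | N + 1, ρ => bsConv d n s t (bsIter d n s t N ρ) ρ

/-- `ρ` is the pure stabilizer state `|ψ⟩⟨ψ|` with stabilizer label group `S ⊆ V^n`:
`S` has order `d^n` and `ψ` is a common eigenvector of all `w(p,q)`, `(p,q) ∈ S`. -/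
noncomputable def IsPureStabilizerWithGroup (d n : ℕ) [Fact (Nat.Prime d)]
    (ρ : Mat d n) (S : AddSubgroup (QV d n × QV d n)) : Prop :=
  Nat.card S = d ^ n ∧
    ∃ ψ : QV d n → ℂ, ψ ≠ 0 ∧
      ρ = Matrix.of (fun a b => ψ a * starRingEnd ℂ (ψ b)) ∧
      ∀ pq ∈ S, ∃ c : ℂ, (weyl d n pq.1 pq.2).mulVec ψ = c • ψ

/-- `ρ` is a pure stabilizer state. -/
noncomputable def IsPureStabilizer (d n : ℕ) [Fact (Nat.Prime d)] (ρ : Mat d n) : Prop :=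
  ∃ S : AddSubgroup (QV d n × QV d n), IsPureStabilizerWithGroup d n ρ S

/-- `ρ` is a stabilizer state: a convex combination of pure stabilizer states. -/
noncomputable def IsStabilizerState (d n : ℕ) [Fact (Nat.Prime d)] (ρ : Mat d n) : Prop :=
  ∃ (m : ℕ) (p : Fin m → ℝ) (τ : Fin m → Mat d n),
    (∀ i, 0 ≤ p i) ∧ ∑ i, p i = 1 ∧ (∀ i, IsPureStabilizer d n (τ i)) ∧
    ρ = ∑ i, (p i : ℂ) • τ i

/-- `U` is a Clifford unitary: a unitary mapping each Weyl operator, under conjugation,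
to a complex phase times a Weyl operator. -/
noncomputable def IsClifford (d n : ℕ) [Fact (Nat.Prime d)] (U : Mat d n) : Prop :=
  U ∈ Matrix.unitaryGroup (QV d n) ℂ ∧
    ∀ pq : QV d n × QV d n, ∃ (c : ℂ) (pq' : QV d n × QV d n),
      ‖c‖ = 1 ∧ U * weyl d n pq.1 pq.2 * Uᴴ = c • weyl d n pq'.1 pq'.2

/-- The divergence-based quantum Fisher information `J(ρ; H) = Tr[ρ [H,[H, log ρ]]]`. -/
noncomputable def fisherJ {d n : ℕ} [Fact (Nat.Prime d)] (ρ H : Mat d n) : ℝ :=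
  (ρ * (H * (H * matLog ρ - matLog ρ * H) - (H * matLog ρ - matLog ρ * H) * H)).trace.re

/-- Embed a single-qudit operator at site `k` of an `n`-qudit system
(tensored with the identity elsewhere). -/
noncomputable def embedAt (d n : ℕ) (k : Fin n) (M : Matrix (ZMod d) (ZMod d) ℂ) :
    Mat d n :=
  Matrix.of fun v w => if ∀ i, i ≠ k → v i = w i then M (v k) (w k) else 0

/-- The rank-one projection `H_j^Z = |j⟩⟨j|` onto the eigenvector of `Z`
with eigenvalue `ξ^j`. -/
noncomputable def projZ (d : ℕ) (j : ZMod d) : Matrix (ZMod d) (ZMod d) ℂ :=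
  Matrix.of fun a b => if a = j ∧ b = j then 1 else 0

/-- The rank-one projection `H_j^X` onto the eigenvector of `X` with eigenvalue `ξ^j`;
its entries are `(H_j^X)_{a b} = d⁻¹ ξ^{j(b-a)}`. -/
noncomputable def projX (d : ℕ) (j : ZMod d) : Matrix (ZMod d) (ZMod d) ℂ :=
  Matrix.of fun a b => (d : ℂ)⁻¹ * ch d (j * (b - a))

/-- Total Fisher information
`J(ρ) = ∑_{k=1}^n ∑_{j ∈ ℤ_d} J(ρ; H_j^{X_k}) + J(ρ; H_j^{Z_k})`. -/
noncomputable def fisherTotal (d n : ℕ) [Fact (Nat.Prime d)] (ρ : Mat d n) : ℝ :=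
  ∑ k : Fin n, ∑ j : ZMod d,
    (fisherJ ρ (embedAt d n k (projX d j)) + fisherJ ρ (embedAt d n k (projZ d j)))

/-- Holevo capacity of a channel `E`:
`χ(E) = sup H(∑ p_i E(ρ_i)) - ∑ p_i H(E(ρ_i))` over finite ensembles of states. -/
noncomputable def holevoCap (d n : ℕ) [Fact (Nat.Prime d)] (E : Mat d n → Mat d n) : ℝ :=
  ⨆ m : ℕ, ⨆ p : Fin m → ℝ, ⨆ ρs : Fin m → Mat d n,
    ⨆ _ : (∀ i, 0 ≤ p i) ∧ ∑ i, p i = 1 ∧ ∀ i, IsState d n (ρs i),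
      (vnEnt (∑ i, (p i : ℂ) • E (ρs i)) - ∑ i, p i * vnEnt (E (ρs i)))

/-- Hilbert–Schmidt norm `‖A‖₂ = (Tr[A†A])^{1/2}`. -/
noncomputable def hsNorm {d n : ℕ} [Fact (Nat.Prime d)] (A : Mat d n) : ℝ :=
  Real.sqrt ((Aᴴ * A).trace.re)

/-- Trace norm `‖A‖₁ = Tr[(A†A)^{1/2}]`. -/
noncomputable def trNorm {d n : ℕ} [Fact (Nat.Prime d)] (A : Mat d n) : ℝ :=
  (matRpow (Aᴴ * A) (2⁻¹ : ℝ)).trace.re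

/-- Tensor product of an `n₁`-qudit operator with an `n₂`-qudit operator,
as an `(n₁+n₂)`-qudit operator. -/
def tensorMat (d n₁ n₂ : ℕ) (ρ₁ : Mat d n₁) (ρ₂ : Mat d n₂) : Mat d (n₁ + n₂) :=
  Matrix.of fun v w =>
    ρ₁ (fun i => v (Fin.castAdd n₂ i)) (fun i => w (Fin.castAdd n₂ i)) *
    ρ₂ (fun j => v (Fin.natAdd n₁ j)) (fun j => w (Fin.natAdd n₁ j))

/-! ### Qubit (`d = 2`) specific definitions -/

/-- The `n`-qubit Weyl (Pauli) operator `w(p,q) = ⊗_i i^{-p_i q_i} Z^{p_i} X^{q_i}`. -/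
noncomputable def weyl2 (n : ℕ) (p q : Fin n → ZMod 2) :
    Matrix (Fin n → ZMod 2) (Fin n → ZMod 2) ℂ :=
  Matrix.of fun k' k =>
    if k' = k + q then
      ∏ i, ((-Complex.I) ^ ((p i).val * (q i).val) *
        (-1 : ℂ) ^ ((p i * (k i + q i)).val))
    else 0

/-- The `n`-qubit characteristic function `Ξ_ρ(p,q) = Tr[ρ w(p,q)†]`. -/
noncomputable def xi2 (n : ℕ) (ρ : Matrix (Fin n → ZMod 2) (Fin n → ZMod 2) ℂ)
    (pq : (Fin n → ZMod 2) × (Fin n → ZMod 2)) : ℂ :=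
  (ρ * (weyl2 n pq.1 pq.2)ᴴ).trace

/-- The logarithmic magic gap
`LMG(ρ) = -log₂ max{|Ξ_ρ(p,q)| : Ξ_ρ(p,q) ≠ 0, |Ξ_ρ(p,q)| ≠ 1}` (`0` if the set is
empty). -/
noncomputable def lmg (n : ℕ) (ρ : Matrix (Fin n → ZMod 2) (Fin n → ZMod 2) ℂ) : ℝ :=
  let s : Finset ℝ :=
    (Finset.univ.filter fun pq : (Fin n → ZMod 2) × (Fin n → ZMod 2) =>
      xi2 n ρ pq ≠ 0 ∧ ‖xi2 n ρ pq‖ ≠ 1).image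
      fun pq => ‖xi2 n ρ pq‖
  if h : s.Nonempty then -Real.logb 2 (s.max' h) else 0

/-- `U` is an `n`-qubit Clifford unitary. -/
noncomputable def IsClifford2 (n : ℕ) (U : Matrix (Fin n → ZMod 2) (Fin n → ZMod 2) ℂ) :
    Prop :=
  U ∈ Matrix.unitaryGroup (Fin n → ZMod 2) ℂ ∧
    ∀ pq : (Fin n → ZMod 2) × (Fin n → ZMod 2),
      ∃ (c : ℂ) (pq' : (Fin n → ZMod 2) × (Fin n → ZMod 2)),
        ‖c‖ = 1 ∧ U * weyl2 n pq.1 pq.2 * Uᴴ = c • weyl2 n pq'.1 pq'.2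

/-- The T gate `diag(1, e^{iπ/4})` acting on qubit `k` of an `n`-qubit system. -/
noncomputable def tGateAt (n : ℕ) (k : Fin n) :
    Matrix (Fin n → ZMod 2) (Fin n → ZMod 2) ℂ :=
  embedAt 2 n k (Matrix.of fun a b =>
    if a = b then (if a = 0 then 1 else Complex.exp (Real.pi * Complex.I / 4)) else 0)

/-- An `n`-qubit state: positive semidefinite with trace one. -/
def IsState2 (n : ℕ) (ρ : Matrix (Fin n → ZMod 2) (Fin n → ZMod 2) ℂ) : Prop :=
  ρ.PosSemidef ∧ ρ.trace = 1

end PaperQI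

namespace PaperQI

/-!
Up to rescaling the labels, the characteristic function is multiplicative under convolution:
`Ξ_{ρ⊠σ}(p, q) = Ξ_ρ(N g₁₁ p, g₀₀ q) Ξ_σ(-N g₁₀ p, g₀₁ q)`. By Parseval, `∑ |Ξ_ρ|² = d^n Tr ρ²`,
while `|Ξ_ρ| ≤ 1` and `Tr ρ² ≤ 1` with equality exactly for pure states. If `ρ ⊠ σ` is pure, then
`d^n = ∑ |Ξ_ρ|²|Ξ_σ|²`, both sums `∑ |Ξ_ρ|²` and `∑ |Ξ_σ|²` being at most `d^n`. This forces `ρ` and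
`σ` to be pure, and `|Ξ_ρ|` and `|Ξ_σ|` to be indicator functions that agree after rescaling. For a
pure state `|ψ⟩⟨ψ|` the labels with `|Ξ| = 1` are those of the Weyl operators with eigenvector `ψ`,
so they form the stabilizer group as soon as `|Ξ|` is an indicator function.
-/

section CharacterSums

variable {ι R : Type*} [Fintype ι] [DecidableEq ι] [CommRing R] [Fintype R]
  {ψ : AddChar R ℂ}

theorem sum_addChar_dotProduct (hψ : ψ.IsPrimitive) (k : ι → R) :
    ∑ p : ι → R, ψ (p ⬝ᵥ k) =
      if k = 0 then (Fintype.card R : ℂ) ^ Fintype.card ι else 0 := by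
  split_ifs with hk
  · simp [hk]
  · obtain ⟨i, hi⟩ : ∃ i, k i ≠ 0 := Function.ne_iff.1 hk
    obtain ⟨x, hx⟩ : ∃ x, ψ (k i * x) ≠ 1 := AddChar.ne_one_iff.1 (hψ hi)
    let χ : AddChar (ι → R) ℂ :=
      ψ.compAddMonoidHom (AddMonoidHom.mk' (· ⬝ᵥ k) fun p q => add_dotProduct p q k)
    have hχ : χ ≠ 1 := AddChar.ne_one_iff.2 ⟨Pi.single i x, by simpa [χ, mul_comm x] using hx⟩
    exact AddChar.sum_eq_zero_of_ne_one hχ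

theorem sum_norm_sq_sum_mul_addChar_dotProduct (hψ : ψ.IsPrimitive) (f : (ι → R) → ℂ) :
    ∑ p : ι → R, ‖∑ k, f k * ψ (p ⬝ᵥ k)‖ ^ 2 =
      (Fintype.card R : ℝ) ^ Fintype.card ι * ∑ k, ‖f k‖ ^ 2 := by
  have expand (p : ι → R) : ((‖∑ k, f k * ψ (p ⬝ᵥ k)‖ ^ 2 : ℝ) : ℂ) =
      ∑ k, ∑ l, f k * starRingEnd ℂ (f l) * ψ (p ⬝ᵥ (k - l)) := by
    push_cast
    rw [← Complex.mul_conj', map_sum, Finset.sum_mul_sum]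
    refine Finset.sum_congr rfl fun k _ => Finset.sum_congr rfl fun l _ => ?_
    rw [map_mul, ← AddChar.map_neg_eq_conj, dotProduct_sub, sub_eq_add_neg,
      AddChar.map_add_eq_mul]
    ring
  have collapse (k : ι → R) :
      ∑ l, f k * starRingEnd ℂ (f l) * ∑ p : ι → R, ψ (p ⬝ᵥ (k - l)) =
        (Fintype.card R : ℂ) ^ Fintype.card ι * ((‖f k‖ ^ 2 : ℝ) : ℂ) := by
    simp_rw [sum_addChar_dotProduct hψ, sub_eq_zero]
    simp [Complex.mul_conj', mul_comm]
  apply Complex.ofReal_injective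
  rw [Complex.ofReal_sum, Finset.sum_congr rfl fun p _ => expand p, Finset.sum_comm]
  simp only [Finset.sum_comm (s := (Finset.univ : Finset (ι → R))), ← Finset.mul_sum, collapse]
  push_cast
  rw [Finset.mul_sum]

end CharacterSums

section RealSums

variable {ι : Type*} [Fintype ι]

theorem exists_eq_single_of_sum_eq_one_of_sum_sq_eq_one [DecidableEq ι] {f : ι → ℝ}
    (hf : ∀ i, 0 ≤ f i) (hsum : ∑ i, f i = 1) (hsq : ∑ i, f i ^ 2 = 1) :
    ∃ i, f = Pi.single i 1 := by
  have hle (i : ι) : f i ≤ 1 :=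
    hsum ▸ Finset.single_le_sum (fun j _ => hf j) (Finset.mem_univ i)
  have idem (i : ι) : f i ^ 2 = f i :=
    (Finset.sum_eq_sum_iff_of_le fun i _ => pow_le_of_le_one (hf i) (hle i) two_ne_zero).1
      (hsq.trans hsum.symm) i (Finset.mem_univ i)
  obtain ⟨i, hi⟩ : ∃ i, f i ≠ 0 := by
    by_contra! h
    simp [h] at hsum
  have hi1 : f i = 1 := by simpa [sq, hi] using idem i
  have hrest : ∑ j ∈ Finset.univ.erase i, f j = 0 := by
    linarith [Finset.add_sum_erase Finset.univ f (Finset.mem_univ i)]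
  refine ⟨i, funext fun j => ?_⟩
  obtain rfl | hj := eq_or_ne j i
  · simpa using hi1
  · rw [Pi.single_eq_of_ne hj]
    exact (Finset.sum_eq_zero_iff_of_nonneg fun j _ => hf j).1 hrest j (by simp [hj])

theorem sum_mul_eq_iff {f g : ι → ℝ} {c : ℝ} (hf0 : ∀ i, 0 ≤ f i) (hf1 : ∀ i, f i ≤ 1)
    (hg0 : ∀ i, 0 ≤ g i) (hg1 : ∀ i, g i ≤ 1) (hf : ∑ i, f i ≤ c) (hg : ∑ i, g i ≤ c) :
    ∑ i, f i * g i = c ↔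
      ∑ i, f i = c ∧ ∑ i, g i = c ∧ ∀ i, f i = g i ∧ (g i = 0 ∨ g i = 1) := by
  constructor
  · intro hfg
    have mul_le_left (i : ι) : f i * g i ≤ f i := mul_le_of_le_one_right (hf0 i) (hg1 i)
    have mul_le_right (i : ι) : f i * g i ≤ g i := mul_le_of_le_one_left (hg0 i) (hf1 i)
    have hf' : ∑ i, f i = c := hf.antisymm (hfg ▸ Finset.sum_le_sum fun i _ => mul_le_left i)
    have hg' : ∑ i, g i = c := hg.antisymm (hfg ▸ Finset.sum_le_sum fun i _ => mul_le_right i)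
    have mul_eq_left (i : ι) : f i * g i = f i :=
      (Finset.sum_eq_sum_iff_of_le fun i _ => mul_le_left i).1 (hfg.trans hf'.symm) i
        (Finset.mem_univ i)
    have mul_eq_right (i : ι) : f i * g i = g i :=
      (Finset.sum_eq_sum_iff_of_le fun i _ => mul_le_right i).1 (hfg.trans hg'.symm) i
        (Finset.mem_univ i)
    have heq (i : ι) : f i = g i := (mul_eq_left i).symm.trans (mul_eq_right i)
    refine ⟨hf', hg', fun i => ⟨heq i, eq_zero_or_one_of_sq_eq_self ?_⟩⟩
    rw [sq]
    simpa only [heq] using mul_eq_right i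
  · rintro ⟨-, rfl, hfg⟩
    refine Finset.sum_congr rfl fun i _ => ?_
    obtain ⟨heq, h | h⟩ := hfg i <;> simp [heq, h]

end RealSums

section Purity

variable {𝕜 ι : Type*} [RCLike 𝕜] [Fintype ι]

/-- The purity `Tr ρ²` of a density matrix `ρ`; the real part makes it real-valued on arbitrary
matrices. -/
noncomputable def purity (ρ : Matrix ι ι 𝕜) : ℝ := RCLike.re (ρ * ρ).trace

variable {ρ : Matrix ι ι 𝕜}

theorem purity_eq_sum_norm_sq (hρ : ρ.IsHermitian) :
    purity ρ = ∑ i, ∑ j, ‖ρ i j‖ ^ 2 := by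
  simp only [purity, trace, diag_apply, mul_apply, map_sum]
  refine Finset.sum_congr rfl fun i _ => Finset.sum_congr rfl fun j _ => ?_
  rw [← hρ.apply j i, RCLike.star_def, RCLike.mul_conj, ← RCLike.ofReal_pow, RCLike.ofReal_re]

theorem purity_eq_sum_eigenvalues_sq [DecidableEq ι] (hρ : ρ.IsHermitian) :
    purity ρ = ∑ i, hρ.eigenvalues i ^ 2 := by
  have hsq : ρ * ρ = Unitary.conjStarAlgAut 𝕜 _ hρ.eigenvectorUnitary
      (diagonal fun i => ((hρ.eigenvalues i ^ 2 : ℝ) : 𝕜)) := by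
    conv_lhs => rw [hρ.spectral_theorem, ← map_mul, diagonal_mul_diagonal]
    simp [sq]
  rw [purity, hsq, Unitary.conjStarAlgAut_apply, trace_mul_cycle, Unitary.coe_star_mul_self,
    one_mul, trace_diagonal, ← RCLike.ofReal_sum, RCLike.ofReal_re]

theorem sum_eigenvalues_eq_one [DecidableEq ι] (hρ : ρ.IsHermitian) (htr : ρ.trace = 1) :
    ∑ i, hρ.eigenvalues i = 1 := by
  have := hρ.trace_eq_sum_eigenvalues
  rw [htr] at this
  exact_mod_cast this.symm

theorem purity_le_one (hρ : ρ.PosSemidef) (htr : ρ.trace = 1) : purity ρ ≤ 1 := by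
  calc purity ρ = ∑ i, hρ.1.eigenvalues i ^ 2 := purity_eq_sum_eigenvalues_sq hρ.1
    _ ≤ (∑ i, hρ.1.eigenvalues i) ^ 2 :=
        Finset.sum_sq_le_sq_sum_of_nonneg fun i _ => hρ.eigenvalues_nonneg i
    _ = 1 := by rw [sum_eigenvalues_eq_one hρ.1 htr, one_pow]

theorem purity_eq_one_iff (hρ : ρ.PosSemidef) (htr : ρ.trace = 1) :
    purity ρ = 1 ↔ ∃ ψ : ι → 𝕜, ρ = vecMulVec ψ (star ψ) := by
  constructor
  · intro hpure
    obtain ⟨i, hi⟩ := exists_eq_single_of_sum_eq_one_of_sum_sq_eq_one hρ.eigenvalues_nonneg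
      (sum_eigenvalues_eq_one hρ.1 htr) (purity_eq_sum_eigenvalues_sq hρ.1 ▸ hpure)
    refine ⟨fun a => (hρ.1.eigenvectorUnitary : Matrix ι ι 𝕜) a i, ?_⟩
    ext a b
    conv_lhs => rw [hρ.1.spectral_theorem, hi, Unitary.conjStarAlgAut_apply]
    simp [mul_apply, vecMulVec_apply, diagonal_apply, Pi.single_apply]
  · rintro ⟨ψ, rfl⟩
    rw [trace_vecMulVec] at htr
    simp [purity, vecMulVec_mul_vecMulVec, trace_vecMulVec, dotProduct_comm (star ψ), htr]

variable [DecidableEq ι]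

theorem norm_trace_mul_le_re_trace {U : Matrix ι ι 𝕜} (hρ : ρ.PosSemidef)
    (hU : U ∈ unitaryGroup ι 𝕜) : ‖(ρ * U).trace‖ ≤ RCLike.re ρ.trace := by
  set V := hρ.1.eigenvectorUnitary
  set W := star (V : Matrix ι ι 𝕜) * U * (V : Matrix ι ι 𝕜)
  have hW : W ∈ unitaryGroup ι 𝕜 := mul_mem (mul_mem (star V).2 hU) V.2
  have htrace : (ρ * U).trace = ∑ i, (hρ.1.eigenvalues i : 𝕜) * W i i := by
    have : (ρ * U).trace = (diagonal (RCLike.ofReal ∘ hρ.1.eigenvalues) * W).trace := by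
      conv_lhs => rw [hρ.1.spectral_theorem, Unitary.conjStarAlgAut_apply]
      simp only [W, V, mul_assoc]
      rw [trace_mul_comm]
      simp only [mul_assoc]
    rw [this, trace]
    simp [diagonal_mul]
  calc ‖(ρ * U).trace‖ ≤ ∑ i, ‖(hρ.1.eigenvalues i : 𝕜) * W i i‖ := htrace ▸ norm_sum_le _ _
    _ ≤ ∑ i, hρ.1.eigenvalues i := Finset.sum_le_sum fun i _ => by
        rw [norm_mul, RCLike.norm_ofReal, abs_of_nonneg (hρ.eigenvalues_nonneg i)]
        exact mul_le_of_le_one_right (hρ.eigenvalues_nonneg i) (entry_norm_bound_of_unitary hW i i)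
    _ = RCLike.re ρ.trace := by
        rw [hρ.1.trace_eq_sum_eigenvalues, ← RCLike.ofReal_sum, RCLike.ofReal_re]

theorem exists_mulVec_eq_smul_iff_norm_trace_eq_one {U : Matrix ι ι 𝕜} (hU : U ∈ unitaryGroup ι 𝕜)
    {ψ : ι → 𝕜} (hψ : ψ ⬝ᵥ star ψ = 1) :
    (∃ c : 𝕜, U *ᵥ ψ = c • ψ) ↔ ‖(vecMulVec ψ (star ψ) * U).trace‖ = 1 := by
  have norm_eq_one {φ : ι → 𝕜} (hφ : φ ⬝ᵥ star φ = 1) : ‖WithLp.toLp 2 φ‖ = 1 := by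
    rw [@norm_eq_sqrt_re_inner 𝕜, EuclideanSpace.inner_eq_star_dotProduct]
    simp [hφ]
  have hUψ : (U *ᵥ ψ) ⬝ᵥ star (U *ᵥ ψ) = 1 := by
    rw [dotProduct_comm, star_mulVec, dotProduct_mulVec, vecMul_vecMul,
      ← star_eq_conjTranspose, mem_unitaryGroup_iff'.1 hU, vecMul_one, dotProduct_comm, hψ]
  have hinner : (vecMulVec ψ (star ψ) * U).trace =
      inner 𝕜 (WithLp.toLp 2 ψ) (WithLp.toLp 2 (U *ᵥ ψ)) := by
    rw [EuclideanSpace.inner_eq_star_dotProduct, vecMulVec_mul, trace_vecMulVec,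
      dotProduct_comm, ← dotProduct_mulVec, dotProduct_comm]
  have hψ0 : WithLp.toLp 2 ψ ≠ 0 := norm_ne_zero_iff.1 (by simp [norm_eq_one hψ])
  have tfae := (norm_inner_eq_norm_tfae 𝕜 (WithLp.toLp 2 ψ) (WithLp.toLp 2 (U *ᵥ ψ))).out 0 2
  rw [norm_eq_one hψ, norm_eq_one hUψ, one_mul, ← hinner] at tfae
  rw [tfae, or_iff_right hψ0]
  exact exists_congr fun c => (WithLp.toLp_injective 2).eq_iff.symm

end Purity

section WeylOperators

variable {d n : ℕ} [Fact (Nat.Prime d)]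

theorem ch_eq_stdAddChar (z : ZMod d) : ch d z = ZMod.stdAddChar z := by
  rw [← ZMod.intCast_zmod_cast z, ZMod.stdAddChar_coe, ch, ZMod.intCast_zmod_cast,
    ZMod.cast_eq_val]
  push_cast
  rfl

theorem ch_zero : ch d 0 = 1 := by
  rw [ch_eq_stdAddChar, AddChar.map_zero_eq_one]

theorem ch_add (x y : ZMod d) : ch d (x + y) = ch d x * ch d y := by
  simp only [ch_eq_stdAddChar, AddChar.map_add_eq_mul]

theorem norm_ch (z : ZMod d) : ‖ch d z‖ = 1 := by
  rw [ch_eq_stdAddChar, AddChar.norm_apply]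

theorem qdot_eq_dotProduct (p k : QV d n) : qdot p k = p ⬝ᵥ k := rfl

theorem weyl_mem_unitaryGroup (p q : QV d n) : weyl d n p q ∈ unitaryGroup (QV d n) ℂ := by
  rw [mem_unitaryGroup_iff']
  ext i j
  obtain rfl | hij := eq_or_ne i j
  · simp [mul_apply, star_apply, weyl, ← Complex.normSq_eq_conj_mul_self,
      Complex.normSq_eq_norm_sq, norm_ch]
  · simp [mul_apply, star_apply, weyl, hij, hij.symm]

theorem weyl_zero : weyl d n 0 0 = 1 := by
  ext i j
  simp [weyl, one_apply, qdot_eq_dotProduct, ch_zero]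

theorem weyl_add (p q p' q' : QV d n) :
    weyl d n (p + p') (q + q') =
      ch d ((2 : ZMod d)⁻¹ * (qdot p q' + qdot p' q) - qdot p q') •
        (weyl d n p q * weyl d n p' q') := by
  ext i j
  have hphase : qdot (p + p') j + (2 : ZMod d)⁻¹ * qdot (p + p') (q + q') =
      ((2 : ZMod d)⁻¹ * (qdot p q' + qdot p' q) - qdot p q') +
        ((qdot p (j + q') + (2 : ZMod d)⁻¹ * qdot p q) +
          (qdot p' j + (2 : ZMod d)⁻¹ * qdot p' q')) := by
    simp only [qdot_eq_dotProduct, add_dotProduct, dotProduct_add]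
    ring
  rw [weyl, of_apply, hphase]
  simp [weyl, mul_apply, ch_add, add_assoc, add_comm q', mul_assoc]

end WeylOperators

section CharacteristicFunction

variable {d n : ℕ} [Fact (Nat.Prime d)]

theorem xi_apply (ρ : Mat d n) (v : QV d n × QV d n) :
    xi d n ρ v =
      ∑ k, ρ k (k - v.2) * ch d ((2 : ZMod d)⁻¹ * qdot v.1 v.2 - qdot v.1 k) := by
  simp [xi, trace, mul_apply, weyl, qdot_eq_dotProduct, sub_eq_add_neg, add_comm]

theorem xi_zero (ρ : Mat d n) : xi d n ρ 0 = ρ.trace := by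
  simp [xi, weyl_zero]

theorem norm_xi_le_one {ρ : Mat d n} (hρ : IsState d n ρ) (v : QV d n × QV d n) :
    ‖xi d n ρ v‖ ≤ 1 := by
  simpa [xi, hρ.2] using norm_trace_mul_le_re_trace hρ.1 (weyl_mem_unitaryGroup (-v.1) (-v.2))

theorem sum_norm_xi_sq {ρ : Mat d n} (hρ : ρ.IsHermitian) :
    ∑ v, ‖xi d n ρ v‖ ^ 2 = (d : ℝ) ^ n * purity ρ := by
  have norm_xi_neg (p q : QV d n) :
      ‖xi d n ρ (-p, q)‖ = ‖∑ k, ρ k (k - q) * ZMod.stdAddChar (p ⬝ᵥ k)‖ := by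
    have factor : xi d n ρ (-p, q) = ch d (-((2 : ZMod d)⁻¹ * qdot p q)) *
        ∑ k, ρ k (k - q) * ZMod.stdAddChar (p ⬝ᵥ k) := by
      simp only [xi_apply, qdot_eq_dotProduct, neg_dotProduct, mul_neg, sub_neg_eq_add, ch_add,
        Finset.mul_sum, ← ch_eq_stdAddChar, mul_left_comm]
    rw [factor, norm_mul, norm_ch, one_mul]
  calc ∑ v, ‖xi d n ρ v‖ ^ 2
      = ∑ q, ∑ p, ‖xi d n ρ (-p, q)‖ ^ 2 := by
        rw [Fintype.sum_prod_type_right]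
        exact Finset.sum_congr rfl fun q _ =>
          (Equiv.sum_comp (Equiv.neg (QV d n)) fun p => ‖xi d n ρ (p, q)‖ ^ 2).symm
    _ = ∑ q, (d : ℝ) ^ n * ∑ k, ‖ρ k (k - q)‖ ^ 2 := Finset.sum_congr rfl fun q _ => by
        simp only [norm_xi_neg]
        rw [sum_norm_sq_sum_mul_addChar_dotProduct (ZMod.isPrimitive_stdAddChar d), ZMod.card,
          Fintype.card_fin]
    _ = (d : ℝ) ^ n * purity ρ := by
        rw [← Finset.mul_sum, Finset.sum_comm, purity_eq_sum_norm_sq hρ]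
        congr 1
        exact Finset.sum_congr rfl fun k _ =>
          (Equiv.subLeft k).sum_comp fun l => ‖ρ k l‖ ^ 2

end CharacteristicFunction

section StabilizerGroups

variable {d n : ℕ} [Fact (Nat.Prime d)]

/-- The labels of the Weyl operators that have `ψ` as an eigenvector. It is the
stabilizer label group of `|ψ⟩⟨ψ|` when that is a stabilizer state. -/
noncomputable def eigenlabelGroup (ψ : QV d n → ℂ) : AddSubgroup (QV d n × QV d n) :=
  let labels : AddSubmonoid (QV d n × QV d n) :=
    { carrier := {v | ∃ c : ℂ, weyl d n v.1 v.2 *ᵥ ψ = c • ψ}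
      zero_mem' := ⟨1, by simp [weyl_zero]⟩
      add_mem' := by
        rintro u v ⟨a, ha⟩ ⟨b, hb⟩
        exact ⟨_, by rw [Prod.fst_add, Prod.snd_add, weyl_add, smul_mulVec, ← mulVec_mulVec, hb,
          mulVec_smul, ha, smul_smul, smul_smul]⟩ }
  { labels with
    neg_mem' := fun {v} hv => by
      have hneg : -v = (d - 1) • v := by
        rw [neg_eq_iff_add_eq_zero, ← succ_nsmul', Nat.sub_add_cancel (NeZero.one_le),
          ZModModule.char_nsmul_eq_zero d v]
      exact hneg ▸ labels.nsmul_mem hv (d - 1) }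

theorem mem_eigenlabelGroup {ψ : QV d n → ℂ} {v : QV d n × QV d n} :
    v ∈ eigenlabelGroup ψ ↔ ∃ c : ℂ, weyl d n v.1 v.2 *ᵥ ψ = c • ψ := Iff.rfl

theorem mem_eigenlabelGroup_iff_norm_xi_eq_one {ψ : QV d n → ℂ} (hψ : ψ ⬝ᵥ star ψ = 1)
    (v : QV d n × QV d n) :
    v ∈ eigenlabelGroup ψ ↔ ‖xi d n (vecMulVec ψ (star ψ)) v‖ = 1 := by
  rw [← neg_mem_iff, mem_eigenlabelGroup,
    exists_mulVec_eq_smul_iff_norm_trace_eq_one (weyl_mem_unitaryGroup _ _) hψ]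
  rfl

theorem sum_ite_mem_eq_natCard {A B : Type*} [SetLike A B] [Fintype B] (S : A) :
    ∑ v, (if v ∈ S then (1 : ℝ) else 0) = Nat.card S := by
  rw [Finset.sum_boole, Nat.card_eq_fintype_card, Fintype.card_subtype]

theorem natCard_eq_of_norm_xi_eq_ite {ρ : Mat d n} (hρ : ρ.IsHermitian) (hpure : purity ρ = 1)
    {S : AddSubgroup (QV d n × QV d n)}
    (hS : ∀ v, ‖xi d n ρ v‖ = if v ∈ S then 1 else 0) : Nat.card S = d ^ n := by
  have := sum_norm_xi_sq hρ
  simp only [hS, ite_pow, one_pow, ne_eq, OfNat.ofNat_ne_zero, not_false_eq_true, zero_pow,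
    sum_ite_mem_eq_natCard, hpure, mul_one] at this
  exact_mod_cast this

theorem norm_xi_eq_ite_of_natCard_eq {ρ : Mat d n} (hρ : ρ.IsHermitian) (hpure : purity ρ = 1)
    {S : AddSubgroup (QV d n × QV d n)} (hcard : Nat.card S = d ^ n)
    (hS : ∀ v ∈ S, ‖xi d n ρ v‖ = 1) (v : QV d n × QV d n) :
    ‖xi d n ρ v‖ = if v ∈ S then 1 else 0 := by
  have hle (v : QV d n × QV d n) : (if v ∈ S then (1 : ℝ) else 0) ≤ ‖xi d n ρ v‖ ^ 2 := by
    split_ifs with hv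
    · rw [hS v hv, one_pow]
    · positivity
  have hsum : ∑ v, (if v ∈ S then (1 : ℝ) else 0) = ∑ v, ‖xi d n ρ v‖ ^ 2 := by
    rw [sum_ite_mem_eq_natCard, hcard, sum_norm_xi_sq hρ, hpure, mul_one, Nat.cast_pow]
  have heq := (Finset.sum_eq_sum_iff_of_le fun v _ => hle v).1 hsum v (Finset.mem_univ v)
  split_ifs with hv
  · exact hS v hv
  · simpa [hv] using heq.symm

theorem isPureStabilizerWithGroup_iff {ρ : Mat d n} (hρ : IsState d n ρ)
    (S : AddSubgroup (QV d n × QV d n)) :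
    IsPureStabilizerWithGroup d n ρ S ↔
      purity ρ = 1 ∧ ∀ v, ‖xi d n ρ v‖ = if v ∈ S then 1 else 0 := by
  constructor
  · rintro ⟨hcard, ψ, -, hψ, heig⟩
    replace hψ : ρ = vecMulVec ψ (star ψ) := hψ
    have hpure : purity ρ = 1 := (purity_eq_one_iff hρ.1 hρ.2).2 ⟨ψ, hψ⟩
    have hnorm : ψ ⬝ᵥ star ψ = 1 := by rw [← trace_vecMulVec, ← hψ, hρ.2]
    refine ⟨hpure, norm_xi_eq_ite_of_natCard_eq hρ.1.1 hpure hcard fun v hv => ?_⟩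
    rw [hψ, ← mem_eigenlabelGroup_iff_norm_xi_eq_one hnorm]
    exact heig v hv
  · rintro ⟨hpure, hS⟩
    obtain ⟨ψ, hψ⟩ := (purity_eq_one_iff hρ.1 hρ.2).1 hpure
    have hnorm : ψ ⬝ᵥ star ψ = 1 := by rw [← trace_vecMulVec, ← hψ, hρ.2]
    refine ⟨natCard_eq_of_norm_xi_eq_ite hρ.1.1 hpure hS, ψ, ?_, hψ, fun v hv => ?_⟩
    · rintro rfl
      simp at hnorm
    · rw [← mem_eigenlabelGroup, mem_eigenlabelGroup_iff_norm_xi_eq_one hnorm, ← hψ, hS,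
        if_pos hv]

theorem exists_isPureStabilizerWithGroup {ρ : Mat d n} (hρ : IsState d n ρ)
    (hpure : purity ρ = 1) (hxi : ∀ v, ‖xi d n ρ v‖ = 0 ∨ ‖xi d n ρ v‖ = 1) :
    ∃ S, IsPureStabilizerWithGroup d n ρ S := by
  obtain ⟨ψ, hψ⟩ := (purity_eq_one_iff hρ.1 hρ.2).1 hpure
  have hnorm : ψ ⬝ᵥ star ψ = 1 := by rw [← trace_vecMulVec, ← hψ, hρ.2]
  refine ⟨eigenlabelGroup ψ, (isPureStabilizerWithGroup_iff hρ _).2 ⟨hpure, fun v => ?_⟩⟩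
  rw [mem_eigenlabelGroup_iff_norm_xi_eq_one hnorm, ← hψ]
  split_ifs with hv
  · exact hv
  · exact (hxi v).resolve_right hv

end StabilizerGroups

section Convolution

variable {d n : ℕ} [Fact (Nat.Prime d)] {g00 g01 g10 g11 : ZMod d}

/-- The permutation of the computational basis labels of the doubled system that is implemented
by the unitary `convU`, spelled as in `convU` so that the two agree definitionally. Its inverse is
the linear map with matrix `Gᵀ`. -/
def convEquiv (n : ℕ) (hdet : g00 * g11 - g01 * g10 ≠ 0) : QV d n × QV d n ≃ QV d n × QV d n where
  toFun ij :=
    ((fun a => (g00 * g11 - g01 * g10)⁻¹ * g11 * ij.1 a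
        - (g00 * g11 - g01 * g10)⁻¹ * g10 * ij.2 a),
      (fun a => -((g00 * g11 - g01 * g10)⁻¹ * g01) * ij.1 a
        + (g00 * g11 - g01 * g10)⁻¹ * g00 * ij.2 a))
  invFun kl := (g00 • kl.1 + g10 • kl.2, g01 • kl.1 + g11 • kl.2)
  left_inv ij := by
    ext a <;> simp only [neg_mul, Pi.add_apply, Pi.smul_apply, smul_eq_mul] <;> field_simp <;> ring
  right_inv kl := by
    ext a <;> simp only [neg_mul, Pi.add_apply, Pi.smul_apply, smul_eq_mul] <;> field_simp <;> ring

theorem convEquiv_symm_apply (hdet : g00 * g11 - g01 * g10 ≠ 0) (k l : QV d n) :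
    (convEquiv n hdet).symm (k, l) = (g00 • k + g10 • l, g01 • k + g11 • l) := rfl

theorem convU_apply (hdet : g00 * g11 - g01 * g10 ≠ 0) (kl ij : QV d n × QV d n) :
    convU d n g00 g01 g10 g11 kl ij = if ij = (convEquiv n hdet).symm kl then 1 else 0 := by
  change (if kl = convEquiv n hdet ij then (1 : ℂ) else 0) = _
  simp only [Equiv.eq_symm_apply, eq_comm]

theorem conv_apply (hdet : g00 * g11 - g01 * g10 ≠ 0) (ρ σ : Mat d n) (i i' : QV d n) :
    conv d n g00 g01 g10 g11 ρ σ i i' =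
      ∑ j, ρ (g00 • i + g10 • j) (g00 • i' + g10 • j) *
        σ (g01 • i + g11 • j) (g01 • i' + g11 • j) := by
  simp only [conv, ptrB, kron, of_apply]
  refine Finset.sum_congr rfl fun j _ => ?_
  simp only [mul_apply, conjTranspose_apply, convU_apply hdet]
  simp only [of_apply, ite_mul, one_mul, zero_mul, Finset.sum_ite_eq', Finset.mem_univ, if_true,
    RCLike.star_def, MonoidWithZeroHom.map_ite_one_zero, mul_ite, mul_one, mul_zero]
  rfl

theorem conv_posSemidef (hdet : g00 * g11 - g01 * g10 ≠ 0) {ρ σ : Mat d n}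
    (hρ : ρ.PosSemidef) (hσ : σ.PosSemidef) : (conv d n g00 g01 g10 g11 ρ σ).PosSemidef := by
  have sum_submatrix : conv d n g00 g01 g10 g11 ρ σ = ∑ j : QV d n,
      (kroneckerMap (· * ·) ρ σ).submatrix
        (fun i => (convEquiv n hdet).symm (i, j)) (fun i => (convEquiv n hdet).symm (i, j)) := by
    ext i i'
    rw [conv_apply hdet, Matrix.sum_apply]
    rfl
  rw [sum_submatrix]
  exact posSemidef_sum _ fun j _ => (hρ.kronecker hσ).submatrix _

theorem xi_conv (hdet : g00 * g11 - g01 * g10 ≠ 0) (ρ σ : Mat d n) (v : QV d n × QV d n) :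
    xi d n (conv d n g00 g01 g10 g11 ρ σ) v =
      xi d n ρ (((g00 * g11 - g01 * g10)⁻¹ * g11) • v.1, g00 • v.2) *
        xi d n σ (-((g00 * g11 - g01 * g10)⁻¹ * g10) • v.1, g01 • v.2) := by
  set N := (g00 * g11 - g01 * g10)⁻¹
  have hphase (k j : QV d n) : (2 : ZMod d)⁻¹ * qdot v.1 v.2 - qdot v.1 k =
      ((2 : ZMod d)⁻¹ * qdot ((N * g11) • v.1) (g00 • v.2) -
          qdot ((N * g11) • v.1) (g00 • k + g10 • j)) +
        ((2 : ZMod d)⁻¹ * qdot (-(N * g10) • v.1) (g01 • v.2) -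
          qdot (-(N * g10) • v.1) (g01 • k + g11 • j)) := by
    simp only [qdot_eq_dotProduct, smul_dotProduct, dotProduct_smul, dotProduct_add, smul_eq_mul]
    linear_combination ((2 : ZMod d)⁻¹ * (v.1 ⬝ᵥ v.2) - v.1 ⬝ᵥ k) * (inv_mul_cancel₀ hdet).symm
  simp only [xi_apply]
  rw [Finset.sum_mul_sum, ← Fintype.sum_prod_type', ← Equiv.sum_comp (convEquiv n hdet).symm,
    Fintype.sum_prod_type]
  refine Finset.sum_congr rfl fun k _ => ?_
  rw [conv_apply hdet, Finset.sum_mul]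
  refine Finset.sum_congr rfl fun j _ => ?_
  rw [convEquiv_symm_apply, hphase k j, ch_add]
  simp only [smul_sub, sub_add_eq_add_sub]
  ring

theorem conv_isState (hdet : g00 * g11 - g01 * g10 ≠ 0) {ρ σ : Mat d n}
    (hρ : IsState d n ρ) (hσ : IsState d n σ) : IsState d n (conv d n g00 g01 g10 g11 ρ σ) := by
  refine ⟨conv_posSemidef hdet hρ.1 hσ.1, ?_⟩
  rw [← xi_zero, xi_conv hdet]
  simp only [Prod.fst_zero, Prod.snd_zero, smul_zero, Prod.mk_zero_zero, xi_zero, hρ.2, hσ.2,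
    mul_one]

/-- The phase space automorphism `(x, y) ↦ (s x, t y)`. -/
def labelScaling (n : ℕ) {s t : ZMod d} (hs : s ≠ 0) (ht : t ≠ 0) :
    (QV d n × QV d n) ≃ₗ[ZMod d] QV d n × QV d n :=
  (LinearEquiv.smulOfNeZero (ZMod d) (QV d n) s hs).prodCongr
    (LinearEquiv.smulOfNeZero (ZMod d) (QV d n) t ht)

theorem labelScaling_apply {s t : ZMod d} (hs : s ≠ 0) (ht : t ≠ 0) (v : QV d n × QV d n) :
    labelScaling n hs ht v = (s • v.1, t • v.2) := rfl

/-- The automorphism of phase space that relates the stabilizer label groups of two states whose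
convolution is pure. -/
def convLabelEquiv (n : ℕ) (h00 : g00 ≠ 0) (h01 : g01 ≠ 0) (h10 : g10 ≠ 0) (h11 : g11 ≠ 0) :
    (QV d n × QV d n) ≃ₗ[ZMod d] QV d n × QV d n :=
  labelScaling n (neg_ne_zero.2 (mul_ne_zero (inv_ne_zero h10) h11))
    (mul_ne_zero (inv_ne_zero h01) h00)

theorem sum_norm_xi_sq_mul_norm_xi_sq (h00 : g00 ≠ 0) (h01 : g01 ≠ 0) (h10 : g10 ≠ 0)
    (h11 : g11 ≠ 0) (hdet : g00 * g11 - g01 * g10 ≠ 0) {ρ σ : Mat d n} (hρ : ρ.PosSemidef)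
    (hσ : σ.PosSemidef) :
    ∑ v, ‖xi d n ρ (convLabelEquiv n h00 h01 h10 h11 v)‖ ^ 2 * ‖xi d n σ v‖ ^ 2 =
      (d : ℝ) ^ n * purity (conv d n g00 g01 g10 g11 ρ σ) := by
  let B := labelScaling n (neg_ne_zero.2 (mul_ne_zero (inv_ne_zero hdet) h10)) h01
  have comp (v : QV d n × QV d n) : convLabelEquiv n h00 h01 h10 h11 (B v) =
      (((g00 * g11 - g01 * g10)⁻¹ * g11) • v.1, g00 • v.2) := by
    simp only [convLabelEquiv, B, labelScaling_apply, smul_smul]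
    congr 2 <;> field_simp
  rw [← sum_norm_xi_sq (conv_posSemidef hdet hρ hσ).1, ← Equiv.sum_comp B.toEquiv]
  refine Finset.sum_congr rfl fun v _ => ?_
  rw [xi_conv hdet, norm_mul, mul_pow, ← comp]
  rfl

theorem purity_conv_eq_one_iff (h00 : g00 ≠ 0) (h01 : g01 ≠ 0) (h10 : g10 ≠ 0)
    (h11 : g11 ≠ 0) (hdet : g00 * g11 - g01 * g10 ≠ 0) {ρ σ : Mat d n}
    (hρ : IsState d n ρ) (hσ : IsState d n σ) :
    purity (conv d n g00 g01 g10 g11 ρ σ) = 1 ↔ purity ρ = 1 ∧ purity σ = 1 ∧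
      ∀ v, ‖xi d n ρ (convLabelEquiv n h00 h01 h10 h11 v)‖ = ‖xi d n σ v‖ ∧
        (‖xi d n σ v‖ = 0 ∨ ‖xi d n σ v‖ = 1) := by
  set C := convLabelEquiv n h00 h01 h10 h11
  have hpos : (0 : ℝ) < (d : ℝ) ^ n := pow_pos (Nat.cast_pos.2 (Fact.out : d.Prime).pos) n
  have sum_left : ∑ v, ‖xi d n ρ (C v)‖ ^ 2 = (d : ℝ) ^ n * purity ρ :=
    (Equiv.sum_comp C.toEquiv fun v => ‖xi d n ρ v‖ ^ 2).trans (sum_norm_xi_sq hρ.1.1)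
  have sum_right : ∑ v, ‖xi d n σ v‖ ^ 2 = (d : ℝ) ^ n * purity σ := sum_norm_xi_sq hσ.1.1
  have saturation := sum_mul_eq_iff
    (fun v => sq_nonneg ‖xi d n ρ (C v)‖)
    (fun v => pow_le_one₀ (norm_nonneg _) (norm_xi_le_one hρ (C v)))
    (fun v => sq_nonneg ‖xi d n σ v‖)
    (fun v => pow_le_one₀ (norm_nonneg _) (norm_xi_le_one hσ v))
    (sum_left.trans_le (mul_le_of_le_one_right hpos.le (purity_le_one hρ.1 hρ.2)))
    (sum_right.trans_le (mul_le_of_le_one_right hpos.le (purity_le_one hσ.1 hσ.2)))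
  simpa only [C, sum_left, sum_right, sum_norm_xi_sq_mul_norm_xi_sq h00 h01 h10 h11 hdet hρ.1 hσ.1,
    mul_eq_left₀ hpos.ne', sq_eq_sq₀ (norm_nonneg _) (norm_nonneg _), sq_eq_zero_iff,
    pow_eq_one_iff_of_nonneg (norm_nonneg _) two_ne_zero] using saturation

end Convolution

/-- Minimal output entropy: `ρ ⊠ σ` is pure iff `ρ` and `σ` are pure
stabilizer states whose stabilizer label groups `S₁, S₂` satisfy
`S₁ = {(-g₁₀⁻¹ g₁₁ x, g₀₁⁻¹ g₀₀ y) : (x,y) ∈ S₂}`. -/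
theorem statement15 (d n : ℕ) [Fact (Nat.Prime d)] (hd : Odd d) (hn : 1 ≤ n)
    (g00 g01 g10 g11 : ZMod d) (h00 : g00 ≠ 0) (h01 : g01 ≠ 0)
    (h10 : g10 ≠ 0) (h11 : g11 ≠ 0) (hdet : g00 * g11 - g01 * g10 ≠ 0)
    (ρ σ : Mat d n) (hρ : IsState d n ρ) (hσ : IsState d n σ) :
    (∃ ψ : QV d n → ℂ, conv d n g00 g01 g10 g11 ρ σ =
        Matrix.of fun a b => ψ a * starRingEnd ℂ (ψ b)) ↔
      ∃ S₁ S₂ : AddSubgroup (QV d n × QV d n),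
        IsPureStabilizerWithGroup d n ρ S₁ ∧ IsPureStabilizerWithGroup d n σ S₂ ∧
        (S₁ : Set (QV d n × QV d n)) =
          (fun xy : QV d n × QV d n =>
            ((fun a => -(g10⁻¹ * g11) * xy.1 a : QV d n),
             (fun a => g01⁻¹ * g00 * xy.2 a : QV d n))) ''
            (S₂ : Set (QV d n × QV d n)) := by
  set C := convLabelEquiv n h00 h01 h10 h11
  change (∃ ψ, conv d n g00 g01 g10 g11 ρ σ = vecMulVec ψ (star ψ)) ↔
    ∃ S₁ S₂ : AddSubgroup (QV d n × QV d n), _ ∧ _ ∧ (S₁ : Set _) = C '' S₂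
  have hconv := conv_isState hdet hρ hσ
  rw [← purity_eq_one_iff hconv.1 hconv.2, purity_conv_eq_one_iff h00 h01 h10 h11 hdet hρ hσ]
  constructor
  · rintro ⟨hρ1, hσ1, hxi⟩
    obtain ⟨S₂, hS₂⟩ := exists_isPureStabilizerWithGroup hσ hσ1 fun v => (hxi v).2
    refine ⟨S₂.map C.toAddMonoidHom, S₂, (isPureStabilizerWithGroup_iff hρ _).2 ⟨hρ1, fun v => ?_⟩,
      hS₂, rfl⟩
    obtain ⟨w, rfl⟩ := C.surjective v
    rw [(hxi w).1, ((isPureStabilizerWithGroup_iff hσ S₂).1 hS₂).2]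
    exact if_congr (C.injective.mem_set_image).symm rfl rfl
  · rintro ⟨S₁, S₂, hS₁, hS₂, himage⟩
    obtain ⟨hρ1, hS₁⟩ := (isPureStabilizerWithGroup_iff hρ S₁).1 hS₁
    obtain ⟨hσ1, hS₂⟩ := (isPureStabilizerWithGroup_iff hσ S₂).1 hS₂
    refine ⟨hρ1, hσ1, fun v => ⟨?_, ?_⟩⟩
    · rw [hS₁, hS₂, ← SetLike.mem_coe, himage, C.injective.mem_set_image, SetLike.mem_coe]
    · rw [hS₂]
      split_ifs <;> simp

end PaperQI
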